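/- Let R be a commutative ring and q, x : ℤ → R. For all i ∈ ℤ and all n ≥ 1, the tridiagonal determinants satisfy the condensation identity D_{i,n}(q,x) · D_{i+1,n}(q,x) = D_{i,n+1}(q,x) · D_{i+1,n-1}(q,x) + ∏_{k=1}^{n} q_{i+k}. (When all q_i are specialized at 1 this recovers Dodgson's determinant evaluation rule for such tridiagonal matrices.) -/

import Mathlib

/-- The `n × n` tridiagonal matrix whose diagonal entries, from top-left to bottom-right,
are `x (i+n-1), x (i+n-2), …, x i`, whose superdiagonal entries are all `1`, and whose
subdiagonal entries, from top to bottom, are `q (i+n-1), …, q (i+1)`. -/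
def triMat {R : Type*} [CommRing R] (q x : ℤ → R) (i : ℤ) (n : ℕ) :
    Matrix (Fin n) (Fin n) R :=
  Matrix.of fun j k =>
    if (j : ℕ) = (k : ℕ) then x (i + (n : ℤ) - 1 - (j : ℕ))
    else if (j : ℕ) + 1 = (k : ℕ) then 1
    else if (k : ℕ) + 1 = (j : ℕ) then q (i + (n : ℤ) - 1 - (k : ℕ))
    else 0

/-- The tridiagonal determinant `D_{i,n}(q,x)`; by convention `D_{i,0}(q,x) = 1`. -/
def triDet {R : Type*} [CommRing R] (q x : ℤ → R) (i : ℤ) (n : ℕ) : R :=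
  (triMat q x i n).det

/-!
Expanding along the first row and column, both `m ↦ D_{i,m+1}` and `m ↦ D_{i+1,m}` satisfy
`y_{m+2} = x_{i+m+2} y_{m+1} - q_{i+m+2} y_m`. The condensation identity computes their
Casoratian, which by the discrete Abel formula is multiplied by `q_{i+m+2}` at each step and
starts at `q_{i+1}`.
-/

section DetExpansion

variable {R : Type*} [CommRing R] {n : ℕ}

theorem det_eq_sub_of_first_row_col_eq_zero (M : Matrix (Fin (n + 2)) (Fin (n + 2)) R)
    (hrow : ∀ k : Fin n, M 0 k.succ.succ = 0) (hcol : ∀ j : Fin n, M j.succ.succ 0 = 0) :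
    M.det = M 0 0 * (M.submatrix Fin.succ Fin.succ).det -
      M 0 1 * M 1 0 * ((M.submatrix Fin.succ Fin.succ).submatrix Fin.succ Fin.succ).det := by
  have minor_det : (M.submatrix Fin.succ (Fin.succAbove 1)).det =
      M 1 0 * ((M.submatrix Fin.succ Fin.succ).submatrix Fin.succ Fin.succ).det := by
    have succAbove_comp_succ : (Fin.succAbove 1 ∘ Fin.succ : Fin n → Fin (n + 2)) =
        Fin.succ ∘ Fin.succ := by
      funext k
      rw [Function.comp_apply, ← Fin.succ_zero_eq_one, Fin.succ_succAbove_succ,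
        Fin.succAbove_zero, Function.comp_apply]
    rw [Matrix.det_succ_column_zero, Fin.sum_univ_succ]
    simp [hcol, succAbove_comp_succ]
  rw [Matrix.det_succ_row_zero, Fin.sum_univ_succ, Fin.sum_univ_succ]
  simp [hrow, minor_det, sub_eq_add_neg, mul_assoc]

end DetExpansion

section Casoratian

variable {R : Type*} [CommRing R]

/-- The Casoratian (discrete Wronskian) of two sequences. For solutions of a common second-order
linear recurrence it is determined, up to its initial value, by the recurrence alone. -/
def casoratian (u v : ℕ → R) (n : ℕ) : R :=
  u n * v (n + 1) - u (n + 1) * v n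

theorem casoratian_succ {a b : R} {u v : ℕ → R} {n : ℕ}
    (hu : u (n + 2) = a * u (n + 1) - b * u n) (hv : v (n + 2) = a * v (n + 1) - b * v n) :
    casoratian u v (n + 1) = b * casoratian u v n := by
  rw [casoratian, casoratian, hu, hv]
  ring

theorem casoratian_eq_prod_mul {a b u v : ℕ → R}
    (hu : ∀ n, u (n + 2) = a n * u (n + 1) - b n * u n)
    (hv : ∀ n, v (n + 2) = a n * v (n + 1) - b n * v n) (n : ℕ) :
    casoratian u v n = (∏ k ∈ Finset.range n, b k) * casoratian u v 0 := by
  induction n with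
  | zero => rw [Finset.prod_range_zero, one_mul]
  | succ n ih =>
    rw [casoratian_succ (hu n) (hv n), ih, Finset.prod_range_succ_comm, mul_assoc]

end Casoratian

section TriDet

variable {R : Type*} [CommRing R] (q x : ℤ → R) (i : ℤ) (n : ℕ)

theorem triMat_submatrix_succ_succ :
    (triMat q x i (n + 1)).submatrix Fin.succ Fin.succ = triMat q x i n := by
  have index_shift (m : ℤ) : i + (n + 1) - 1 - (m + 1) = i + n - 1 - m := by ring
  ext j k
  simp [triMat, index_shift]

theorem triDet_zero : triDet q x i 0 = 1 :=
  Matrix.det_fin_zero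

theorem triDet_one : triDet q x i 1 = x i := by
  simp [triDet, triMat]

theorem triDet_add_two :
    triDet q x i (n + 2) =
      x (i + n + 1) * triDet q x i (n + 1) - q (i + n + 1) * triDet q x i n := by
  have top_index : i + (n + 2) - 1 = i + n + 1 := by ring
  have diag_entry : triMat q x i (n + 2) 0 0 = x (i + n + 1) := by simp [triMat, top_index]
  have super_entry : triMat q x i (n + 2) 0 1 = 1 := by simp [triMat]
  have sub_entry : triMat q x i (n + 2) 1 0 = q (i + n + 1) := by simp [triMat, top_index]
  rw [triDet, det_eq_sub_of_first_row_col_eq_zero _ (by simp [triMat]) (by simp [triMat]),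
    triMat_submatrix_succ_succ, triMat_submatrix_succ_succ, diag_entry, super_entry, sub_entry,
    one_mul, triDet, triDet]

theorem casoratian_triDet :
    casoratian (fun m ↦ triDet q x i (m + 1)) (triDet q x (i + 1)) n =
      ∏ k ∈ Finset.Icc 1 (n + 1), q (i + (k : ℕ)) := by
  have initial_value :
      casoratian (fun m ↦ triDet q x i (m + 1)) (triDet q x (i + 1)) 0 = q (i + 1) := by
    simp only [casoratian, triDet_add_two, triDet_one, triDet_zero, zero_add, Nat.cast_zero,
      add_zero, mul_one]
    ring
  have recurrence (m : ℕ) : triDet q x i (m + 3) =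
      x (i + m + 2) * triDet q x i (m + 2) - q (i + m + 2) * triDet q x i (m + 1) := by
    have top_index : i + ((m + 1 : ℕ) : ℤ) + 1 = i + m + 2 := by push_cast; ring
    rw [triDet_add_two, top_index]
  have recurrence_shifted (m : ℕ) : triDet q x (i + 1) (m + 2) =
      x (i + m + 2) * triDet q x (i + 1) (m + 1) - q (i + m + 2) * triDet q x (i + 1) m := by
    have top_index : i + 1 + m + 1 = i + m + 2 := by ring
    rw [triDet_add_two, top_index]
  have prod_eq : ∏ k ∈ Finset.Icc 1 (n + 1), q (i + (k : ℕ)) =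
      (∏ k ∈ Finset.range n, q (i + k + 2)) * q (i + 1) := by
    have index_shift (k : ℕ) : i + ((1 + (k + 1) : ℕ) : ℤ) = i + k + 2 := by push_cast; ring
    rw [← Finset.Ico_add_one_right_eq_Icc, Finset.prod_Ico_eq_prod_range, Nat.add_sub_cancel,
      Finset.prod_range_succ']
    simp only [index_shift, add_zero, Nat.cast_one]
  rw [casoratian_eq_prod_mul recurrence recurrence_shifted, initial_value, prod_eq]

end TriDet

/-- The condensation identity
`D_{i,n} · D_{i+1,n} = D_{i,n+1} · D_{i+1,n-1} + ∏_{k=1}^{n} q_{i+k}`. -/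
theorem triDet_condensation {R : Type*} [CommRing R] (q x : ℤ → R)
    (i : ℤ) (n : ℕ) (hn : 1 ≤ n) :
    triDet q x i n * triDet q x (i + 1) n =
      triDet q x i (n + 1) * triDet q x (i + 1) (n - 1) +
        ∏ k ∈ Finset.Icc 1 n, q (i + (k : ℕ)) := by
  obtain ⟨m, rfl⟩ := Nat.exists_eq_add_of_le' hn
  rw [Nat.add_sub_cancel, ← casoratian_triDet q x, casoratian]
  ring
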